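/- arXiv:2511.09202 — 3 statements merged into one kernel-verified Lean document; each statement's English description precedes it below -/
import Mathlib

section
/- Let k : [0,∞) → ℝ be a profile function (C¹ on [0,1], non-increasing, convex, k'(t) < 0 for all t ∈ [0,1), with k(1) = 0, k'(1) = 0, and k(t) = 0 for t ≥ 1). Given points x₁, …, xₙ ∈ ℝ^d and bandwidth h > 0, define L(X) = Σ_{1 ≤ i ≤ j ≤ n} k(‖x_i − x_j‖²/h²). Then the total gradient of L at the state X = (x₁, …, xₙ) vanishes if and only if for all pairs (i, j) ∈ [n]², ‖x_i − x_j‖ < h holds if and only if x_j = x_i; that is, any two sample points either coincide or are at distance at least h from each other. -/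
noncomputable section

open scoped BigOperators

/-- Points of `ℝ^d`. -/
abbrev Pt (d : ℕ) : Type := EuclideanSpace ℝ (Fin d)

/-- A state `X = (x₁, …, xₙ)`, viewed as a point of the Euclidean space `ℝ^{dn}`. -/
abbrev State (d n : ℕ) : Type := PiLp 2 (fun _ : Fin n => Pt d)

/-- The BMS objective function `L(X) = Σ_{1 ≤ i ≤ j ≤ n} k(‖x_i − x_j‖²/h²)`. -/
def BMSObjective {d n : ℕ} (k : ℝ → ℝ) (h : ℝ) (X : State d n) : ℝ :=
  ∑ i : Fin n, ∑ j ∈ Finset.univ.filter (fun j => i ≤ j), k (‖X i - X j‖ ^ 2 / h ^ 2)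

/-- A profile that vanishes on `[1, ∞)` and has `k' 1 = 0` has zero derivative on `[1, ∞)`. -/
lemma profile_deriv_eq_zero_of_one_le {k k' : ℝ → ℝ}
    (hC1 : ∀ t ∈ Set.Ici (0 : ℝ), HasDerivWithinAt k (k' t) (Set.Ici 0) t)
    (hk'1 : k' 1 = 0) (hkzero : ∀ t : ℝ, 1 ≤ t → k t = 0) {t : ℝ} (ht : 1 ≤ t) :
    k' t = 0 := by
  rcases ht.eq_or_lt with rfl | ht
  · exact hk'1
  · have hd : HasDerivAt k (k' t) t :=
      (hC1 t (by simp; linarith)).hasDerivAt (Ici_mem_nhds (by linarith))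
    refine hd.unique ((hasDerivAt_const t (0 : ℝ)).congr_of_eventuallyEq ?_)
    filter_upwards [Ioi_mem_nhds ht] with s hs using hkzero s (Set.mem_Ioi.1 hs).le

/-- The difference `x_i - x_j` as a continuous linear function of the state. -/
def stateDiff {d n : ℕ} (i j : Fin n) : State d n →L[ℝ] Pt d :=
  PiLp.proj (𝕜 := ℝ) 2 (fun _ => Pt d) i - PiLp.proj (𝕜 := ℝ) 2 (fun _ => Pt d) j

@[simp]
lemma stateDiff_apply {d n : ℕ} (i j : Fin n) (X : State d n) :
    stateDiff i j X = X i - X j := rfl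

/-- The derivative of the squared-distance kernel between the points `i` and `j` of a state. -/
lemma hasFDerivAt_profile_dist {d n : ℕ} {k k' : ℝ → ℝ}
    (hC1 : ∀ t ∈ Set.Ici (0 : ℝ), HasDerivWithinAt k (k' t) (Set.Ici 0) t)
    (h : ℝ) (X : State d n) (i j : Fin n) :
    HasFDerivAt (fun Y : State d n => k (‖Y i - Y j‖ ^ 2 / h ^ 2))
      ((k' (‖X i - X j‖ ^ 2 / h ^ 2) * (2 / h ^ 2)) •
        (innerSL ℝ (X i - X j)).comp (stateDiff i j)) X := by
  have hsub : HasFDerivAt (fun Y : State d n => Y i - Y j) (stateDiff i j) X :=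
    (stateDiff i j).hasFDerivAt
  have hsq := hsub.norm_sq.mul_const ((h ^ 2)⁻¹)
  simp only [← div_eq_mul_inv] at hsq
  have hcomp := (hC1 (‖X i - X j‖ ^ 2 / h ^ 2)
    (Set.mem_Ici.2 (by positivity))).comp_hasFDerivAt X hsq
      (Filter.Eventually.of_forall fun Y => Set.mem_Ici.2 (by positivity))
  refine hcomp.congr_fderiv (ContinuousLinearMap.ext fun v => ?_)
  simp only [smul_apply, ContinuousLinearMap.comp_apply, smul_eq_mul,
    nsmul_eq_mul, Nat.cast_ofNat]
  ring

/-- The directional derivative of the BMS objective. -/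
lemma inner_gradient_BMSObjective {d n : ℕ} {k k' : ℝ → ℝ}
    (hC1 : ∀ t ∈ Set.Ici (0 : ℝ), HasDerivWithinAt k (k' t) (Set.Ici 0) t)
    (h : ℝ) (X V : State d n) :
    inner ℝ (gradient (BMSObjective k h) X) V =
      ∑ i : Fin n, ∑ j ∈ Finset.univ.filter (fun j => i ≤ j),
        k' (‖X i - X j‖ ^ 2 / h ^ 2) * (2 / h ^ 2) * inner ℝ (X i - X j) (V i - V j) := by
  have hL : HasFDerivAt (BMSObjective k h)
      (∑ i : Fin n, ∑ j ∈ Finset.univ.filter (fun j => i ≤ j),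
        (k' (‖X i - X j‖ ^ 2 / h ^ 2) * (2 / h ^ 2)) •
          (innerSL ℝ (X i - X j)).comp (stateDiff i j)) X :=
    HasFDerivAt.fun_sum fun i _ => HasFDerivAt.fun_sum fun j _ =>
      hasFDerivAt_profile_dist hC1 h X i j
  rw [hL.hasGradientAt.gradient, InnerProductSpace.toDual_symm_apply]
  simp only [sum_apply, smul_apply,
    ContinuousLinearMap.comp_apply, stateDiff_apply, innerSL_apply_apply, smul_eq_mul]

/-- For a profile function `k` (C¹, non-increasing, convex, `k' < 0` on
`[0,1)`, with `k(1) = 0`, `k'(1) = 0`, extended by `0` beyond `1`), the gradient of the BMS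
objective `L` vanishes at the state `X` if and only if any two sample points either coincide
or are at distance at least `h` from each other. -/
theorem gradient_BMSObjective_eq_zero_iff_ideal_clustering
    {d n : ℕ} (k k' : ℝ → ℝ)
    (hC1 : ∀ t ∈ Set.Ici (0 : ℝ), HasDerivWithinAt k (k' t) (Set.Ici 0) t)
    (hk'cont : ContinuousOn k' (Set.Ici 0))
    (hknonneg : ∀ t ∈ Set.Icc (0 : ℝ) 1, 0 ≤ k t)
    (hanti : AntitoneOn k (Set.Icc 0 1))
    (hconv : ConvexOn ℝ (Set.Icc 0 1) k)
    (hk'neg : ∀ t, 0 ≤ t → t < 1 → k' t < 0)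
    (hk1 : k 1 = 0) (hk'1 : k' 1 = 0)
    (hkzero : ∀ t : ℝ, 1 ≤ t → k t = 0)
    (h : ℝ) (hh : 0 < h) (X : State d n) :
    gradient (BMSObjective k h) X = 0 ↔
      ∀ i j : Fin n, (‖X i - X j‖ < h ↔ X j = X i) := by
  have hone : ∀ i j : Fin n, ‖X i - X j‖ < h ↔ ‖X i - X j‖ ^ 2 / h ^ 2 < 1 := fun i j => by
    rw [div_lt_one (by positivity), sq_lt_sq₀ (norm_nonneg _) hh.le]
  constructor
  · intro hgrad
    have hsum := inner_gradient_BMSObjective hC1 h X X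
    rw [hgrad, inner_zero_left] at hsum
    have hterm : ∀ i j : Fin n,
        k' (‖X i - X j‖ ^ 2 / h ^ 2) * (2 / h ^ 2) * inner ℝ (X i - X j) (X i - X j) ≤ 0 := by
      intro i j
      have hk' : k' (‖X i - X j‖ ^ 2 / h ^ 2) ≤ 0 := by
        rcases lt_or_ge (‖X i - X j‖ ^ 2 / h ^ 2) 1 with ht | ht
        · exact (hk'neg _ (by positivity) ht).le
        · exact (profile_deriv_eq_zero_of_one_le hC1 hk'1 hkzero ht).le
      rw [real_inner_self_eq_norm_sq, mul_assoc]
      exact mul_nonpos_of_nonpos_of_nonneg hk' (by positivity)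
    have hle : ∀ i j : Fin n, i ≤ j → ‖X i - X j‖ < h → X i = X j := by
      intro i j hij hlt
      have hi := (Finset.sum_eq_zero_iff_of_nonpos fun i _ =>
        Finset.sum_nonpos fun j _ => hterm i j).1 hsum.symm i (Finset.mem_univ i)
      have hj := (Finset.sum_eq_zero_iff_of_nonpos fun j _ => hterm i j).1 hi j (by simpa using hij)
      have hk' := (hk'neg _ (by positivity) ((hone i j).1 hlt)).ne
      have hc : (2 / h ^ 2 : ℝ) ≠ 0 := by positivity
      exact sub_eq_zero.1 (inner_self_eq_zero.1 ((mul_eq_zero.1 hj).resolve_left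
        (mul_ne_zero hk' hc)))
    intro i j
    refine ⟨fun hlt => ?_, fun heq => by simpa [heq] using hh⟩
    rcases le_total i j with hij | hij
    · exact (hle i j hij hlt).symm
    · exact hle j i hij (by rwa [norm_sub_rev])
  · intro hX
    refine ext_inner_right ℝ fun V => ?_
    rw [inner_gradient_BMSObjective hC1, inner_zero_left]
    refine Finset.sum_eq_zero fun i _ => Finset.sum_eq_zero fun j _ => ?_
    by_cases hlt : ‖X i - X j‖ < h
    · simp [(hX i j).1 hlt]
    · rw [hone, not_lt] at hlt
      simp [profile_deriv_eq_zero_of_one_le hC1 hk'1 hkzero hlt]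
end
end

section
/- Let k : [0,∞) → ℝ be a profile function (C¹ on [0,1], non-increasing, convex, k'(t) < 0 on [0,1), k(1) = 0, k'(1) = 0, k(t) = 0 for t ≥ 1), G(u) = −k'(‖u‖²) the associated weight function, x₁, …, xₙ ∈ ℝ^d, h > 0, and L(X) = Σ_{1 ≤ i ≤ j ≤ n} k(‖x_i − x_j‖²/h²). Then the gradient of L at X = (x₁, …, xₙ) vanishes if and only if X is a fixed point of the blurring mean-shift transformation, i.e. for every i ∈ [n], x_i = (Σ_{j=1}^n G((x_i − x_j)/h)·x_j) / (Σ_{j=1}^n G((x_i − x_j)/h)); the denominator is positive because G(0) = −k'(0) > 0. -/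
noncomputable section

open scoped BigOperators

/-- The weight function `G(u) = −k'(‖u‖²)` associated with the profile `k`. -/
def weightFn {d : ℕ} (k' : ℝ → ℝ) (u : Pt d) : ℝ := -k' (‖u‖ ^ 2)

/-- A sum of `F i j + F j i` over the ordered pairs `i ≤ j` is the full double sum of `F`, provided
`F` vanishes on the diagonal. -/
lemma sum_sum_filter_le_add_swap {ι M : Type*} [Fintype ι] [LinearOrder ι] [AddCommMonoid M]
    (F : ι → ι → M) (hF : ∀ i, F i i = 0) :
    ∑ i, ∑ j ∈ Finset.univ.filter (fun j => i ≤ j), (F i j + F j i) = ∑ i, ∑ j, F i j := by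
  have hswap : ∑ i, ∑ j, (if i ≤ j then F j i else 0) = ∑ i, ∑ j, (if j ≤ i then F i j else 0) :=
    Finset.sum_comm
  simp only [Finset.sum_add_distrib, Finset.sum_filter]
  rw [hswap, ← Finset.sum_add_distrib]
  refine Finset.sum_congr rfl fun i _ => ?_
  rw [← Finset.sum_add_distrib]
  refine Finset.sum_congr rfl fun j _ => ?_
  rcases lt_trichotomy i j with hij | rfl | hij
  · simp [hij.le, hij.not_ge]
  · simp [hF]
  · simp [hij.le, hij.not_ge]

/-- The weight at a rescaled difference, in terms of the argument of the profile. -/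
lemma weightFn_inv_smul {d : ℕ} (k' : ℝ → ℝ) (h : ℝ) (u : Pt d) :
    weightFn k' (h⁻¹ • u) = -k' (‖u‖ ^ 2 / h ^ 2) := by
  rw [weightFn, norm_smul, mul_pow, norm_inv, inv_pow, Real.norm_eq_abs, sq_abs, div_eq_inv_mul]

/-- The derivative of a single pair interaction `X ↦ k(‖x_i − x_j‖²/h²)`. -/
lemma hasFDerivAt_pair_interaction {d n : ℕ} {k k' : ℝ → ℝ}
    (hk : ∀ t ∈ Set.Ici (0 : ℝ), HasDerivWithinAt k (k' t) (Set.Ici 0) t)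
    (h : ℝ) (X : State d n) (i j : Fin n) :
    HasFDerivAt (fun Y : State d n => k (‖Y i - Y j‖ ^ 2 / h ^ 2))
      ((-(2 / h ^ 2) * weightFn k' (h⁻¹ • (X i - X j))) •
        (innerSL ℝ (X i - X j)).comp
          (PiLp.proj (𝕜 := ℝ) 2 (fun _ : Fin n => Pt d) i -
            PiLp.proj (𝕜 := ℝ) 2 (fun _ : Fin n => Pt d) j)) X := by
  have hdiff : HasFDerivAt (fun Y : State d n => Y i - Y j)
      (PiLp.proj (𝕜 := ℝ) 2 (fun _ : Fin n => Pt d) i -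
        PiLp.proj (𝕜 := ℝ) 2 (fun _ : Fin n => Pt d) j) X :=
    ContinuousLinearMap.hasFDerivAt (PiLp.proj (𝕜 := ℝ) 2 (fun _ : Fin n => Pt d) i -
      PiLp.proj (𝕜 := ℝ) 2 (fun _ : Fin n => Pt d) j)
  have hquot := (hdiff.norm_sq.mul_const (h ^ 2)⁻¹).hasFDerivWithinAt (s := Set.univ)
  have hk_at := hk (‖X i - X j‖ ^ 2 * (h ^ 2)⁻¹) (Set.mem_Ici.2 (by positivity))
  have hcomp := hk_at.comp_hasFDerivWithinAt X hquot
    (fun Y _ => Set.mem_Ici.2 (by positivity))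
  rw [hasFDerivWithinAt_univ] at hcomp
  rw [weightFn_inv_smul]
  simp only [div_eq_mul_inv]
  refine hcomp.congr_fderiv ?_
  ext v
  simp
  ring

/-- The gradient of the BMS objective. -/
lemma hasGradientAt_BMSObjective {d n : ℕ} {k k' : ℝ → ℝ}
    (hk : ∀ t ∈ Set.Ici (0 : ℝ), HasDerivWithinAt k (k' t) (Set.Ici 0) t)
    (h : ℝ) (X : State d n) :
    HasGradientAt (BMSObjective k h)
      (WithLp.toLp 2 fun i =>
        (-(2 / h ^ 2)) • ∑ j, weightFn k' (h⁻¹ • (X i - X j)) • (X i - X j)) X := by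
  rw [hasGradientAt_iff_hasFDerivAt]
  have hsum := HasFDerivAt.fun_sum (u := Finset.univ) fun (i : Fin n) _ =>
    HasFDerivAt.fun_sum (u := Finset.univ.filter (fun j => i ≤ j)) fun j _ =>
      hasFDerivAt_pair_interaction hk h X i j
  refine hsum.congr_fderiv ?_
  ext v
  have hpair := sum_sum_filter_le_add_swap
    (fun i j : Fin n => (-(2 / h ^ 2) * weightFn k' (h⁻¹ • (X i - X j))) *
      inner ℝ (X i - X j) (v i)) (fun i => by simp)
  simp only [ContinuousLinearMap.sum_apply, InnerProductSpace.toDual_apply_apply]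
  rw [PiLp.inner_apply]
  simp only [inner_smul_left, sum_inner, Finset.mul_sum]
  refine Eq.trans ?_ (hpair.trans ?_)
  · refine Finset.sum_congr rfl fun i _ => Finset.sum_congr rfl fun j _ => ?_
    have hw : weightFn k' (h⁻¹ • (X j - X i)) = weightFn k' (h⁻¹ • (X i - X j)) := by
      rw [weightFn_inv_smul, weightFn_inv_smul, norm_sub_rev]
    rw [hw, ← neg_sub (X i) (X j), inner_neg_left]
    simp only [ContinuousLinearMap.smul_apply, ContinuousLinearMap.comp_apply,
      ContinuousLinearMap.sub_apply, PiLp.proj_apply, innerSL_apply_apply, inner_sub_right,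
      smul_eq_mul]
    ring
  · refine Finset.sum_congr rfl fun i _ => Finset.sum_congr rfl fun j _ => ?_
    rw [RCLike.conj_to_real, RCLike.conj_to_real, mul_assoc]

/-- A weighted sum of displacements from `x` vanishes iff `x` is the weighted average. -/
lemma sum_smul_sub_eq_zero_iff_eq_inv_smul {ι E : Type*} [Fintype ι] [AddCommGroup E] [Module ℝ E]
    (w : ι → ℝ) (hw : ∑ j, w j ≠ 0) (x : E) (y : ι → E) :
    ∑ j, w j • (x - y j) = 0 ↔ x = (∑ j, w j)⁻¹ • ∑ j, w j • y j := by
  simp only [smul_sub, Finset.sum_sub_distrib]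
  rw [← Finset.sum_smul, sub_eq_zero, eq_inv_smul_iff₀ hw]

/-- For a profile function `k` (C¹, non-increasing, convex, `k' < 0` on
`[0,1)`, with `k(1) = 0`, `k'(1) = 0`, extended by `0` beyond `1`) and the associated weight
function `G(u) = −k'(‖u‖²)`, the denominators `Σⱼ G((x_i − x_j)/h)` are positive (since
`G(0) = −k'(0) > 0`), and the gradient of the BMS objective `L` vanishes at `X` if and only
if `X` is a fixed point of the blurring mean-shift transformation, i.e. each `x_i` equals
the `G`-weighted average of all the points. -/
theorem gradient_BMSObjective_eq_zero_iff_BMS_fixed_point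
    {d n : ℕ} (k k' : ℝ → ℝ)
    (hC1 : ∀ t ∈ Set.Ici (0 : ℝ), HasDerivWithinAt k (k' t) (Set.Ici 0) t)
    (hk'cont : ContinuousOn k' (Set.Ici 0))
    (hknonneg : ∀ t ∈ Set.Icc (0 : ℝ) 1, 0 ≤ k t)
    (hanti : AntitoneOn k (Set.Icc 0 1))
    (hconv : ConvexOn ℝ (Set.Icc 0 1) k)
    (hk'neg : ∀ t, 0 ≤ t → t < 1 → k' t < 0)
    (hk1 : k 1 = 0) (hk'1 : k' 1 = 0)
    (hkzero : ∀ t : ℝ, 1 ≤ t → k t = 0)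
    (hk'zero : ∀ t : ℝ, 1 ≤ t → k' t = 0)
    (h : ℝ) (hh : 0 < h) (X : State d n) :
    (∀ i : Fin n, 0 < ∑ j : Fin n, weightFn k' ((h : ℝ)⁻¹ • (X i - X j))) ∧
    (gradient (BMSObjective k h) X = 0 ↔
      ∀ i : Fin n,
        X i = (∑ j : Fin n, weightFn k' ((h : ℝ)⁻¹ • (X i - X j)))⁻¹ •
          ∑ j : Fin n, weightFn k' ((h : ℝ)⁻¹ • (X i - X j)) • X j) := by
  have hpos : ∀ i : Fin n, 0 < ∑ j : Fin n, weightFn k' ((h : ℝ)⁻¹ • (X i - X j)) := by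
    intro i
    refine Finset.sum_pos' (fun j _ => ?_) ⟨i, Finset.mem_univ i, ?_⟩
    · rw [weightFn, neg_nonneg]
      rcases lt_or_ge (‖(h : ℝ)⁻¹ • (X i - X j)‖ ^ 2) 1 with hlt | hge
      · exact (hk'neg _ (by positivity) hlt).le
      · exact (hk'zero _ hge).le
    · simpa [weightFn] using hk'neg 0 le_rfl one_pos
  refine ⟨hpos, ?_⟩
  rw [(hasGradientAt_BMSObjective hC1 h X).gradient, PiLp.ext_iff]
  refine forall_congr' fun i => ?_
  rw [← sum_smul_sub_eq_zero_iff_eq_inv_smul _ (hpos i).ne']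
  have hc : -(2 / h ^ 2) ≠ 0 := neg_ne_zero.2 (by positivity)
  exact smul_eq_zero_iff_right hc
end
end

section
/- Let k : [0,∞) → ℝ be a profile function extended by 0 beyond 1 (C¹ on [0,∞) with k(1) = 0 and k'(1) = 0), K(u) = k(‖u‖²), G(u) = −k'(‖u‖²), x₁, …, xₙ ∈ ℝ^d, h > 0, and let f̂(x) = (1/(n h^d)) Σ_{i=1}^n K((x − x_i)/h) be the kernel density estimate. Then for every x ∈ ℝ^d, the gradient of f̂ at x equals ∇f̂(x) = (2/(n h^{d+2})) · Σ_{i=1}^n G((x − x_i)/h)·(x_i − x). Consequently, whenever Σ_{i=1}^n G((x − x_i)/h) > 0, the shift vector m_h(x; X) = S_h(x; X) − x satisfies m_h(x; X) = (n h^{d+2} / (2 Σ_{i=1}^n G((x − x_i)/h))) · ∇f̂(x), i.e. the shift vector is a positive scalar multiple of the gradient of the kernel density estimate. -/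
noncomputable section

open scoped BigOperators

/-- The kernel density estimate `f̂(x) = (1/(n hᵈ)) Σᵢ K((x − x_i)/h)` with
`K(u) = k(‖u‖²)`. -/
def kde {d n : ℕ} (k : ℝ → ℝ) (h : ℝ) (X : Fin n → Pt d) (x : Pt d) : ℝ :=
  (1 / (n * h ^ d)) * ∑ i : Fin n, k (‖(h : ℝ)⁻¹ • (x - X i)‖ ^ 2)

/-- The mean-shift operator `S_h(x; X)`. -/
def meanShiftOp {d n : ℕ} (k' : ℝ → ℝ) (h : ℝ) (X : Fin n → Pt d) (x : Pt d) : Pt d :=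
  (∑ i : Fin n, weightFn k' ((h : ℝ)⁻¹ • (x - X i)))⁻¹ •
    ∑ i : Fin n, weightFn k' ((h : ℝ)⁻¹ • (x - X i)) • X i

/-- The gradient of a radial function `y ↦ k (‖c • (y - a)‖²)`, where `k` need only be
differentiable within `[0, ∞)`. -/
lemma hasGradientAt_comp_norm_sq_smul_sub {E : Type*} [NormedAddCommGroup E]
    [InnerProductSpace ℝ E] [CompleteSpace E] {k : ℝ → ℝ} {m c : ℝ} {a x : E}
    (hk : HasDerivWithinAt k m (Set.Ici 0) (‖c • (x - a)‖ ^ 2)) :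
    HasGradientAt (fun y => k (‖c • (y - a)‖ ^ 2)) ((2 * c ^ 2 * m) • (x - a)) x := by
  have hsq := (((hasFDerivAt_id x).sub_const a).const_smul c).norm_sq
  have hcomp := hk.comp_hasFDerivWithinAt x hsq.hasFDerivWithinAt
    (fun y _ => sq_nonneg ‖c • (y - a)‖ : Set.MapsTo _ Set.univ _)
  rw [hasFDerivWithinAt_univ] at hcomp
  rw [hasGradientAt_iff_hasFDerivAt]
  refine hcomp.congr_fderiv ?_
  ext v
  simp
  ring

/-- For a profile function `k` extended by `0` beyond `1` (C¹ on `[0,∞)`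
with `k(1) = 0` and `k'(1) = 0`), the gradient of the kernel density estimate satisfies
`∇f̂(x) = (2/(n h^{d+2})) Σᵢ G((x − x_i)/h)(x_i − x)`, and whenever the denominator
`Σᵢ G((x − x_i)/h)` is positive, the shift vector `m_h(x; X) = S_h(x; X) − x` is the
positive scalar multiple `(n h^{d+2} / (2 Σᵢ G((x − x_i)/h)))` of `∇f̂(x)`. -/
theorem gradient_kde_and_shift_vector
    {d n : ℕ} (hn : 0 < n) (k k' : ℝ → ℝ)
    (hC1 : ∀ t ∈ Set.Ici (0 : ℝ), HasDerivWithinAt k (k' t) (Set.Ici 0) t)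
    (hk'cont : ContinuousOn k' (Set.Ici 0))
    (hk1 : k 1 = 0) (hk'1 : k' 1 = 0)
    (hkzero : ∀ t : ℝ, 1 ≤ t → k t = 0)
    (X : Fin n → Pt d) (h : ℝ) (hh : 0 < h) :
    (∀ x : Pt d,
        gradient (kde k h X) x =
          (2 / (n * h ^ (d + 2))) •
            ∑ i : Fin n, weightFn k' ((h : ℝ)⁻¹ • (x - X i)) • (X i - x)) ∧
    (∀ x : Pt d,
        0 < ∑ i : Fin n, weightFn k' ((h : ℝ)⁻¹ • (x - X i)) →
        meanShiftOp k' h X x - x =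
          ((n * h ^ (d + 2)) / (2 * ∑ i : Fin n, weightFn k' ((h : ℝ)⁻¹ • (x - X i)))) •
            gradient (kde k h X) x) := by
  have hgrad : ∀ x : Pt d,
      gradient (kde k h X) x =
        (2 / (n * h ^ (d + 2))) •
          ∑ i : Fin n, weightFn k' ((h : ℝ)⁻¹ • (x - X i)) • (X i - x) := by
    intro x
    refine HasGradientAt.gradient ?_
    have hsum := (HasFDerivAt.fun_sum fun i (_ : i ∈ Finset.univ) =>
      (hasGradientAt_comp_norm_sq_smul_sub (a := X i)
        (hC1 (‖h⁻¹ • (x - X i)‖ ^ 2) (Set.mem_Ici.2 (sq_nonneg _)))).hasFDerivAt).const_mul (1 / (n * h ^ d))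
    rw [hasGradientAt_iff_hasFDerivAt]
    refine hsum.congr_fderiv ?_
    rw [← map_sum, ← map_smul, Finset.smul_sum, Finset.smul_sum]
    congr 1
    refine Finset.sum_congr rfl fun i _ => ?_
    rw [weightFn, ← neg_sub x (X i), smul_neg, neg_smul, neg_neg, smul_smul, smul_smul]
    congr 1
    field_simp
    ring
  refine ⟨hgrad, fun x hpos => ?_⟩
  rw [hgrad, meanShiftOp, smul_smul]
  set W := ∑ i : Fin n, weightFn k' (h⁻¹ • (x - X i)) with hW
  have hcoef : n * h ^ (d + 2) / (2 * W) * (2 / (n * h ^ (d + 2))) = W⁻¹ := by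
    field_simp
  have hsplit : ∑ i : Fin n, weightFn k' (h⁻¹ • (x - X i)) • (X i - x) =
      (∑ i : Fin n, weightFn k' (h⁻¹ • (x - X i)) • X i) - W • x := by
    rw [hW, Finset.sum_smul, ← Finset.sum_sub_distrib]
    exact Finset.sum_congr rfl fun i _ => smul_sub _ _ _
  rw [hcoef, hsplit, smul_sub, smul_smul, inv_mul_cancel₀ hpos.ne', one_smul]
end
end
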